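/- arXiv:2502.04879 — 3 statements merged into one kernel-verified Lean document; each statement's English description precedes it below -/
import Mathlib

section
/- Fix a target label y* ∈ Y with |Y| ≥ 2, a map g: X → X with signal set X̃, and α ∈ (0,1). Assume D_X(x̃) > 0 for every x̃ ∈ X̃. Let h be the feature-label signal planting strategy h(x,y) := (g(x), y*), let P := α·D̃ + (1−α)·D, and let f: X → Y be any classifier that is 0-suboptimal on X̃ under P (i.e., f(x̃) ∈ argmax_{y∈Y} P(x̃,y) for all x̃ ∈ X̃). Then, with Δ_{x̃} := max_{y'∈Y∖{y*}} ( D(x̃, y') − D(x̃, y*) ), the following chain of inequalities holds: P_{(x,y)∼D}(f(g(x)) = y*) ≥ P_{x̃∼D̃_X}[ α·D̃_X(x̃) − (1−α)·Δ_{x̃} > 0 ] ≥ 1 − ((1−α)/α) · D_X(X̃) · max_{x̃∈X̃} max_{y∈Y} ( D(y | x̃) − D(y* | x̃) ), where D(y | x̃) := D(x̃, y)/D_X(x̃). In particular, the lower bound P_{x̃∼D̃_X}[ α·D̃_X(x̃) − (1−α)·Δ_{x̃} > 0 ] is at least as tight as the lower bound 1 − ((1−α)/α)·D_X(X̃)·max_{x̃∈X̃}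 max_{y∈Y}( D(y|x̃) − D(y*|x̃) ) of Hardt et al. -/
/-!
Planting sends all the mass of `D` to the label `ystar`, so the planted mass of a signal `x` is
`G x = D_X (g ⁻¹ {x})`, all of it at `(x, ystar)`.

First inequality: if `f x ≠ ystar` for a signal `x`, then suboptimality at `ystar` reads
`α * G x ≤ (1 - α) * (D (x, f x) - D (x, ystar)) ≤ (1 - α) * Δ x`. Hence every signal with
`α * G x - (1 - α) * Δ x > 0` is classified as `ystar`, and the probability of the event
`f (g x) = ystar` is the `G`-mass of `{x | f x = ystar}`.

Second inequality: since `G` has total mass `1`, it suffices to bound the `G`-mass of the signals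
with `α * G x ≤ (1 - α) * Δ x`. For each of them `G x ≤ (1 - α) / α * Δ x`, and
`Δ x ≤ D_X x * M`, where `M` is the maximal conditional gap (nonnegative, as `y = ystar` is allowed
in it). Summing over the signal set gives `(1 - α) / α * D_X (range g) * M`.
-/

open Finset

attribute [local instance] Classical.propDecidable

noncomputable section

/-- A probability mass function on a finite type. -/
def IsDistribution {Z : Type*} [Fintype Z] (P : Z → ℝ) : Prop :=
  (∀ z, 0 ≤ P z) ∧ ∑ z, P z = 1

/-- Probability of an event `E` under a pmf `P`. -/
def probOf {Z : Type*} [Fintype Z] (P : Z → ℝ) (E : Set Z) : ℝ :=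
  ∑ z, if z ∈ E then P z else 0

/-- Total variation distance between two pmfs. -/
def TV {Z : Type*} [Fintype Z] (P Q : Z → ℝ) : ℝ :=
  ⨆ E : Set Z, |probOf P E - probOf Q E|

/-- `f` is `ε`-suboptimal on `X'` under the distribution `P`. -/
def Suboptimal {X Y : Type*} [Fintype X] [Fintype Y] (ε : ℝ) (f : X → Y)
    (X' : Set X) (P : X × Y → ℝ) : Prop :=
  ∃ Pt : X × Y → ℝ, IsDistribution Pt ∧ TV P Pt ≤ ε ∧
    ∀ x ∈ X', ∀ y : Y, Pt (x, y) ≤ Pt (x, f x)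

/-- Empirical probability of an event for a dataset (tuple) `S`. -/
def empProb {Z : Type*} {k : ℕ} (S : Fin k → Z) (E : Set Z) : ℝ :=
  (∑ i, if S i ∈ E then (1 : ℝ) else 0) / k

/-- Empirical probability of a feature predicate for a dataset of pairs. -/
def empProbX {X Y : Type*} {k : ℕ} (S : Fin k → X × Y) (φ : X → Prop) : ℝ :=
  (∑ i, if φ (S i).1 then (1 : ℝ) else 0) / k

/-- Empirical point mass `P̂_S(x,y)`. -/
def empPoint {X Y : Type*} {k : ℕ} (S : Fin k → X × Y) (x : X) (y : Y) : ℝ :=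
  empProb S {p | p = (x, y)}

/-- Empirical feature marginal `P̂_S(x)`. -/
def empFeat {X Y : Type*} {k : ℕ} (S : Fin k → X × Y) (x : X) : ℝ :=
  empProb S {p | p.1 = x}

/-- Hoeffding error term `R_δ(k) = √(log(1/δ)/(2k))`. -/
def Rbd (δ : ℝ) (k : ℕ) : ℝ := Real.sqrt (Real.log (1 / δ) / (2 * (k : ℝ)))

/-- Product (i.i.d.) weight of a dataset under pmf `D`. -/
def iidWeight {Z : Type*} {k : ℕ} (D : Z → ℝ) (s : Fin k → Z) : ℝ := ∏ i, D (s i)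

/-- The platform's empirical mixture distribution built from the (modified) collective
dataset `St` (of size `k`) and the base dataset `T`, with total population `N`. -/
def mixDist {X Y : Type*} {k m : ℕ} (N : ℕ) (St : Fin k → X × Y) (T : Fin m → X × Y) :
    X × Y → ℝ :=
  fun p => ((k : ℝ) / N) * empProb St {q | q = p}
    + (((N : ℝ) - (k : ℝ)) / N) * empProb T {q | q = p}

/-- Feature marginal of a distribution on `X × Y`. -/
def marginalX {X Y : Type*} [Fintype Y] (D : X × Y → ℝ) (x : X) : ℝ := ∑ y, D (x, y)

/-- Pushforward of a pmf by a map. -/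
def pushforward {Z W : Type*} [Fintype Z] (h : Z → W) (D : Z → ℝ) (w : W) : ℝ :=
  ∑ z, if h z = w then D z else 0

/-- Probability of a predicate under a marginal pmf on features. -/
def probOfX {X : Type*} [Fintype X] (DX : X → ℝ) (φ : X → Prop) : ℝ :=
  ∑ x, if φ x then DX x else 0

/-- The planted mass of a feature `x`: the `D`-mass of the points whose feature `g` maps to `x`. -/
def plantedMass {X Y : Type*} [Fintype X] [Fintype Y] (g : X → X) (D : X × Y → ℝ) (x : X) : ℝ :=
  ∑ p : X × Y, if g p.1 = x then D p else 0

lemma plantedMass_nonneg {X Y : Type*} [Fintype X] [Fintype Y] (g : X → X) {D : X × Y → ℝ}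
    (hD : IsDistribution D) (x : X) : 0 ≤ plantedMass g D x := by
  refine Finset.sum_nonneg fun p _ => ?_
  split_ifs
  exacts [hD.1 p, le_rfl]

lemma plantedMass_eq_zero {X Y : Type*} [Fintype X] [Fintype Y] {g : X → X} (D : X × Y → ℝ)
    {x : X} (hx : x ∉ Set.range g) : plantedMass g D x = 0 :=
  Finset.sum_eq_zero fun p _ => if_neg fun e => hx ⟨p.1, e⟩

lemma pushforward_planting {X Y : Type*} [Fintype X] [Fintype Y] (g : X → X) (ystar : Y)
    (D : X × Y → ℝ) (x : X) (y : Y) :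
    pushforward (fun p : X × Y => (g p.1, ystar)) D (x, y)
      = if y = ystar then plantedMass g D x else 0 := by
  unfold pushforward plantedMass
  by_cases hy : y = ystar
  · simp [hy]
  · simp [hy, Ne.symm hy]

lemma marginalX_planting {X Y : Type*} [Fintype X] [Fintype Y] (g : X → X) (ystar : Y)
    (D : X × Y → ℝ) :
    marginalX (pushforward (fun p : X × Y => (g p.1, ystar)) D) = plantedMass g D := by
  funext x
  simp [marginalX, pushforward_planting]

/-- The change of variables formula for the map `p ↦ g p.1`. -/
lemma probOfX_plantedMass {X Y : Type*} [Fintype X] [Fintype Y] (g : X → X)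
    (D : X × Y → ℝ) (φ : X → Prop) :
    probOfX (plantedMass g D) φ = probOf D {p | φ (g p.1)} := by
  have e : ∀ x, (if φ x then plantedMass g D x else 0)
      = ∑ p : X × Y, if g p.1 = x then (if φ (g p.1) then D p else 0) else 0 := by
    intro x
    unfold plantedMass
    split_ifs with hx
    · refine Finset.sum_congr rfl fun p _ => ?_
      by_cases hp : g p.1 = x <;> simp [hp, hx]
    · refine (Finset.sum_eq_zero fun p _ => ?_).symm
      by_cases hp : g p.1 = x <;> simp [hp, hx]
  unfold probOfX probOf
  simp_rw [e]
  rw [Finset.sum_comm]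
  simp

lemma sum_plantedMass {X Y : Type*} [Fintype X] [Fintype Y] (g : X → X)
    {D : X × Y → ℝ} (hD : IsDistribution D) : ∑ x, plantedMass g D x = 1 := by
  simpa [probOfX, probOf, hD.2] using probOfX_plantedMass g D fun _ => True

/-- Comparison with the prior lower bound of Hardt et al. for feature-label signal
planting in the infinite data regime, when `ε = 0`. -/
theorem signal_planting_bound_comparison
    {X Y : Type*} [Fintype X] [Fintype Y] [Nonempty X] [Nonempty Y]
    (hY : 2 ≤ Fintype.card Y)
    (ystar : Y) (g : X → X)
    (α : ℝ) (hα0 : 0 < α) (hα1 : α < 1)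
    (D : X × Y → ℝ) (hD : IsDistribution D)
    (hpos : ∀ xt ∈ Set.range g, 0 < marginalX D xt)
    (h : X × Y → X × Y) (hh : h = fun p => (g p.1, ystar))
    (f : X → Y)
    -- `f` is 0-suboptimal on the signal set under `P = α·D̃ + (1-α)·D`
    (hf : ∀ xt ∈ Set.range g, ∀ y : Y,
      α * pushforward h D (xt, y) + (1 - α) * D (xt, y) ≤
        α * pushforward h D (xt, f xt) + (1 - α) * D (xt, f xt)) :
    probOf D {p | f (g p.1) = ystar} ≥
      probOfX (marginalX (pushforward h D)) (fun xt =>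
        α * marginalX (pushforward h D) xt
          - (1 - α) * (⨆ y' : {y : Y // y ≠ ystar}, (D (xt, y'.1) - D (xt, ystar))) > 0)
    ∧
    probOfX (marginalX (pushforward h D)) (fun xt =>
        α * marginalX (pushforward h D) xt
          - (1 - α) * (⨆ y' : {y : Y // y ≠ ystar}, (D (xt, y'.1) - D (xt, ystar))) > 0) ≥
      1 - ((1 - α) / α) * probOfX (marginalX D) (fun x => x ∈ Set.range g) *
        (⨆ xt : Set.range g, ⨆ y : Y,
          (D (xt.1, y) / marginalX D xt.1 - D (xt.1, ystar) / marginalX D xt.1)) := by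
  subst hh
  simp only [pushforward_planting] at hf
  rw [marginalX_planting]
  set G := plantedMass g D with hG
  have hG0 : ∀ x, 0 ≤ G x := plantedMass_nonneg g hD
  set Δ : X → ℝ := fun x => ⨆ y' : {y : Y // y ≠ ystar}, (D (x, y'.1) - D (x, ystar)) with hΔ
  set M : ℝ := ⨆ xt : Set.range g, ⨆ y : Y,
    (D (xt.1, y) / marginalX D xt.1 - D (xt.1, ystar) / marginalX D xt.1) with hM
  have hβ : 0 ≤ 1 - α := by linarith
  constructor
  · have hev : probOf D {p | f (g p.1) = ystar} = probOfX G fun x => f x = ystar :=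
      (probOfX_plantedMass g D fun x => f x = ystar).symm
    rw [ge_iff_le, hev]
    refine Finset.sum_le_sum fun x _ => ?_
    by_cases hfx : f x = ystar
    · rw [if_pos hfx]
      split_ifs
      exacts [le_rfl, hG0 x]
    · rw [if_neg hfx]
      split_ifs with hgood
      · by_cases hx : x ∈ Set.range g
        · exfalso
          have h1 := hf x hx ystar
          rw [if_pos rfl, if_neg hfx] at h1
          have h2 : D (x, f x) - D (x, ystar) ≤ Δ x :=
            le_ciSup (f := fun y' : {y : Y // y ≠ ystar} => D (x, y'.1) - D (x, ystar))
              (Set.finite_range _).bddAbove ⟨f x, hfx⟩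
          have h3 := mul_le_mul_of_nonneg_left h2 hβ
          change α * G x - (1 - α) * Δ x > 0 at hgood
          linarith
        · exact (plantedMass_eq_zero D hx).le
      · exact le_rfl
  · have hgap : ∀ x ∈ Set.range g, ∀ y,
        D (x, y) / marginalX D x - D (x, ystar) / marginalX D x ≤ M := by
      intro x hx y
      exact (le_ciSup (f := fun y => D (x, y) / marginalX D x - D (x, ystar) / marginalX D x)
        (Set.finite_range _).bddAbove y).trans
        (le_ciSup (f := fun xt : Set.range g => ⨆ y : Y,
          (D (xt.1, y) / marginalX D xt.1 - D (xt.1, ystar) / marginalX D xt.1))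
        (Set.finite_range _).bddAbove ⟨x, hx⟩)
    have hM0 : 0 ≤ M := by
      obtain ⟨x⟩ := ‹Nonempty X›
      simpa using hgap (g x) ⟨x, rfl⟩ ystar
    have hΔM : ∀ x ∈ Set.range g, Δ x ≤ marginalX D x * M := by
      intro x hx
      have hm := hpos x hx
      refine Real.iSup_le (fun y' => ?_) (mul_nonneg hm.le hM0)
      have := hgap x hx y'.1
      rw [← sub_div, div_le_iff₀ hm] at this
      linarith
    -- `G x` is either counted in the good event or dominated by the Hardt et al. term at `x`.
    have key : ∀ x, G x ≤ (if α * G x - (1 - α) * Δ x > 0 then G x else 0)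
        + (1 - α) / α * (if x ∈ Set.range g then marginalX D x else 0) * M := by
      intro x
      by_cases hx : x ∈ Set.range g
      · have hm := hpos x hx
        have hb : 0 ≤ (1 - α) / α * marginalX D x * M := by positivity
        rw [if_pos hx]
        split_ifs with hgood
        · linarith
        · have h1 : α * G x ≤ (1 - α) * (marginalX D x * M) :=
            (not_lt.1 (fun h => hgood (sub_pos.2 h))).trans
              (mul_le_mul_of_nonneg_left (hΔM x hx) hβ)
          have h2 : (1 - α) / α * marginalX D x * M = (1 - α) * (marginalX D x * M) / α := by
            ring
          rw [zero_add, h2, le_div_iff₀ hα0]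
          linarith
      · have : G x = 0 := plantedMass_eq_zero D hx
        simp [hx, this]
    have hsum := Finset.sum_le_sum fun x (_ : x ∈ Finset.univ) => key x
    rw [sum_plantedMass g hD, Finset.sum_add_distrib, ← Finset.sum_mul, ← Finset.mul_sum] at hsum
    -- `probOfX` decides its predicate classically, hence the instances still to be identified.
    refine sub_le_iff_le_add.2 (hsum.trans_eq ?_)
    unfold probOfX
    congr!
end
end

section
/- Let X and Y be finite nonempty sets, g: X → X an idempotent map (g(g(x)) = g(x) for all x ∈ X) with signal set X̃, n < N positive integers, and y*: X̃ → Y a labeling of the signal set. Let S̃ ∈ (X×Y)^n be a dataset every entry of which has the form (x, y*_{g(x)}) for some x ∈ X (the erasure strategy applied to a dataset of features), and let T ∈ (X×Y)^{N−n} be a dataset such that for every x̃ ∈ X̃, y*_{x̃} is the unique maximizer of y ↦ P̂_T(x̃, y). Let P̂ := (n/N)·P̂_{S̃} + ((N−n)/N)·P̂_T. Then for every x' ∈ X, y*_{g(x')} is the unique maximizer of y ↦ P̂(g(x'), y); consequently, every classifier f̂: X → Y with f̂(x) ∈ argmax_{y∈Y} P̂(x, y) for all x ∈ X satisfies f̂(g(x'))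 = y*_{g(x')} for all x' ∈ X. -/
/-!
Every collective entry with feature `g x'` has, by idempotence of `g`, the label
`ystar (g (g x')) = ystar (g x')`. The collective dataset therefore puts no mass on any other
label at `g x'` (`empProb_erasure_eq_zero`), while the base dataset strictly prefers
`ystar (g x')` there. Since the base dataset has positive weight `(N - n) / N`, the mixture
inherits the strict preference, and a maximizing classifier must follow it.
-/

open Finset

attribute [local instance] Classical.propDecidable

noncomputable section

theorem empProb_nonneg {Z : Type*} {k : ℕ} (S : Fin k → Z) (E : Set Z) :
    0 ≤ empProb S E := by
  unfold empProb
  refine div_nonneg (Finset.sum_nonneg fun i _ => ?_) (Nat.cast_nonneg k)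
  split_ifs <;> norm_num

/-- An erased dataset puts no mass on a wrong label at a point of the signal set. -/
theorem empProb_erasure_eq_zero {X Y : Type*} {n : ℕ} (g : X → X) (hg : ∀ x, g (g x) = g x)
    (ystar : X → Y) (St : Fin n → X × Y) (hSt : ∀ i, ∃ x : X, St i = (x, ystar (g x)))
    (x' : X) (y : Y) (hy : y ≠ ystar (g x')) :
    empProb St {q | q = (g x', y)} = 0 := by
  unfold empProb
  rw [Finset.sum_eq_zero, zero_div]
  intro i _
  refine if_neg fun h => hy ?_
  obtain ⟨x, hx⟩ := hSt i
  have h' : (x, ystar (g x)) = (g x', y) := hx.symm.trans h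
  obtain ⟨rfl, rfl⟩ := Prod.mk.inj h'
  rw [hg]

/-- Deterministic core of the signal erasing argument: under the erasure strategy, the
mixture distribution keeps `y*_{g(x')}` as the unique most likely label at `g(x')`,
so any optimal classifier satisfies `f̂(g(x')) = y*_{g(x')}`. -/
theorem signal_erasing_deterministic_core
    {X Y : Type*} [Fintype X] [Fintype Y] [Nonempty X] [Nonempty Y]
    (g : X → X) (hg : ∀ x, g (g x) = g x)
    (n N : ℕ) (hn : 0 < n) (hnN : n < N)
    -- the labeling `y*` of the signal set
    (ystar : X → Y)
    -- `S̃` is the erasure strategy applied to a dataset of features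
    (St : Fin n → X × Y) (hSt : ∀ i, ∃ x : X, St i = (x, ystar (g x)))
    (T : Fin (N - n) → X × Y)
    (hT : ∀ xt ∈ Set.range g, ∀ y : Y, y ≠ ystar xt →
      empPoint T xt y < empPoint T xt (ystar xt)) :
    (∀ x' : X, ∀ y : Y, y ≠ ystar (g x') →
      mixDist N St T (g x', y) < mixDist N St T (g x', ystar (g x')))
    ∧ ∀ f : X → Y,
        (∀ x : X, ∀ y : Y, mixDist N St T (x, y) ≤ mixDist N St T (x, f x)) →
        ∀ x' : X, f (g x') = ystar (g x') := by
  have key : ∀ x' : X, ∀ y : Y, y ≠ ystar (g x') →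
      mixDist N St T (g x', y) < mixDist N St T (g x', ystar (g x')) := by
    intro x' y hy
    have hlt : empProb T {q | q = (g x', y)} < empProb T {q | q = (g x', ystar (g x'))} :=
      hT (g x') ⟨x', rfl⟩ y hy
    have hnN' : (n : ℝ) < N := by exact_mod_cast hnN
    have hN : (0 : ℝ) < N := lt_of_le_of_lt (Nat.cast_nonneg n) hnN'
    have hw : 0 < ((N : ℝ) - n) / N := div_pos (sub_pos.mpr hnN') hN
    have hS : 0 ≤ ((n : ℝ) / N) * empProb St {q | q = (g x', ystar (g x'))} :=
      mul_nonneg (by positivity) (empProb_nonneg _ _)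
    unfold mixDist
    rw [empProb_erasure_eq_zero g hg ystar St hSt x' y hy, mul_zero]
    exact add_lt_add_of_le_of_lt hS (mul_lt_mul_of_pos_left hlt hw)
  refine ⟨key, fun f hf x' => ?_⟩
  by_contra hne
  exact absurd (hf (g x') (ystar (g x'))) (not_le.mpr (key x' _ hne))
end
end

section
/- Let X and Y be finite nonempty sets, D a distribution on X×Y, g: X → X with signal set X̃, and suppose there exist η > 0 and, for each x̃ ∈ X̃, a label y*_{x̃} ∈ Y such that D(x̃, y*_{x̃}) > D(x̃, y') + η for all y' ∈ Y∖{y*_{x̃}} (Assumption A1). Let δ̃ ∈ (0,1) and let n be a positive integer with n ≥ 2·log(1/δ̃)/η². Then, with probability at least 1 − |X̃|·|Y|·δ̃ over a dataset S ∈ (X×Y)^n drawn with coordinates i.i.d. from D, it holds that for every x̃ ∈ X̃, y*_{x̃} is the unique maximizer of y ↦ P̂_S(x̃, y); that is, y*_{x̃} = argmax_{y∈Y} P̂_S(x̃, y) for all x̃ ∈ X̃. -/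
/-!
By a union bound it suffices to show that, for a signal `xt` and a label `y ≠ ystar xt`, the
empirical count of `(xt, y)` reaches that of `(xt, ystar xt)` with probability at most `δt`.
Since `D (xt, ystar xt) - D (xt, y) > η`, this is a Hoeffding bound for i.i.d. variables in
`[-1, 1]` with mean above `η`, giving `exp (-n η² / 2) ≤ δt` (`iid_tail`).

The Hoeffding bound is obtained by Chernoff's method with the explicit multipliers
`a = (1 - η) / s` and `b = (1 + η) / s`, where `s = √(1 - η²)`, so that `a * b = 1`: a sample pays
`a` at the favoured point, `b` at its rival and `1` elsewhere. The product of the multipliers is at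
least `1` on the bad event (`one_le_prod_tilt`), while each has mean at most
`s ≤ exp (-η² / 2)` (`sum_tilt_le`).
-/

open Finset

attribute [local instance] Classical.propDecidable

noncomputable section

/-- The Chernoff multiplier: `a` at the point `z₀`, `b` at the point `z₁`, and `1` elsewhere. -/
def tilt {Z : Type*} (z₀ z₁ : Z) (a b : ℝ) (z : Z) : ℝ :=
  if z = z₀ then a else if z = z₁ then b else 1

lemma sum_iidWeight {Z : Type*} [Fintype Z] (D : Z → ℝ) (n : ℕ) :
    ∑ S : Fin n → Z, iidWeight D S = (∑ z, D z) ^ n := by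
  simp only [iidWeight]
  rw [Fintype.sum_pow]

lemma empProb_singleton_eq {Z : Type*} {n : ℕ} (S : Fin n → Z) (z : Z) :
    empProb S {p | p = z} = ((univ.filter fun i => S i = z).card : ℝ) / n := by
  simp [empProb]

/-- Since `a * b = 1`, the product of the multipliers is `b` to the power by which the count of
`z₁` exceeds that of `z₀`. -/
lemma one_le_prod_tilt {Z : Type*} {n : ℕ} (hn : 0 < n) {z₀ z₁ : Z} (hne : z₀ ≠ z₁)
    {a b : ℝ} (hb : 1 ≤ b) (hab : a * b = 1) (S : Fin n → Z)
    (hS : empProb S {p | p = z₀} ≤ empProb S {p | p = z₁}) :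
    1 ≤ ∏ i, tilt z₀ z₁ a b (S i) := by
  have hn' : (0 : ℝ) < n := by exact_mod_cast hn
  rw [empProb_singleton_eq, empProb_singleton_eq, div_le_div_iff_of_pos_right hn'] at hS
  have hc : (univ.filter fun i => S i = z₀).card ≤ (univ.filter fun i => S i = z₁).card := by
    exact_mod_cast hS
  have hsplit : ∀ z, tilt z₀ z₁ a b z = (if z = z₀ then a else 1) * (if z = z₁ then b else 1) := by
    intro z
    unfold tilt
    by_cases h0 : z = z₀
    · simp [h0, hne]
    · simp [h0]
  simp only [hsplit, prod_mul_distrib, prod_ite, prod_const_one, mul_one, prod_const]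
  obtain ⟨d, hd⟩ := Nat.exists_eq_add_of_le hc
  rw [hd, pow_add, ← mul_assoc, ← mul_pow, hab, one_pow, one_mul]
  exact one_le_pow₀ hb

/-- With `a = (1 - η) / s` and `b = (1 + η) / s`, the mean of the Chernoff multiplier is at most
`s = √(1 - η²)`. -/
lemma sum_tilt_le {Z : Type*} [Fintype Z] {D : Z → ℝ} (hD : IsDistribution D)
    {z₀ z₁ : Z} (hne : z₀ ≠ z₁) {η s : ℝ} (hη : 0 < η) (hs : 0 < s) (hs2 : s ^ 2 = 1 - η ^ 2)
    (hgap : D z₁ + η < D z₀) :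
    ∑ z, D z * tilt z₀ z₁ ((1 - η) / s) ((1 + η) / s) z ≤ s := by
  have hpq : D z₀ + D z₁ ≤ 1 := by
    rw [← hD.2, ← sum_pair hne]
    exact sum_le_sum_of_subset_of_nonneg (subset_univ _) fun z _ _ => hD.1 z
  have hterm : ∀ z, D z * tilt z₀ z₁ ((1 - η) / s) ((1 + η) / s) z
      = D z + (if z = z₀ then D z * ((1 - η) / s - 1) else 0)
        + (if z = z₁ then D z * ((1 + η) / s - 1) else 0) := by
    intro z
    unfold tilt
    by_cases h0 : z = z₀
    · simp only [h0, hne, if_true, if_false]; ring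
    · by_cases h1 : z = z₁
      · simp only [h1, hne.symm, if_true, if_false]; ring
      · simp [h0, h1]
  simp only [hterm, sum_add_distrib, sum_ite_eq', mem_univ, if_true, hD.2]
  have hs1 : s ≤ 1 := by nlinarith [sq_nonneg η]
  have hmul : (1 + D z₀ * ((1 - η) / s - 1) + D z₁ * ((1 + η) / s - 1)) * s
      = s + D z₀ * (1 - η - s) + D z₁ * (1 + η - s) := by
    field_simp
  refine le_of_mul_le_mul_right ?_ hs
  rw [hmul]
  -- Equivalent to `(1 - s) * (D z₀ + D z₁) - η * (D z₀ - D z₁) ≤ (1 - s) - η ^ 2`.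
  rw [show s * s = 1 - η ^ 2 by rw [← hs2, sq]]
  nlinarith [mul_nonneg (sub_nonneg.2 hpq) (sub_nonneg.2 hs1),
    mul_pos hη (sub_pos.2 hgap)]

/-- Hoeffding's inequality for the difference of two empirical point masses. -/
lemma iid_tail {Z : Type*} [Fintype Z] {D : Z → ℝ} (hD : IsDistribution D)
    {z₀ z₁ : Z} (hne : z₀ ≠ z₁) {η : ℝ} (hη : 0 < η) (hgap : D z₁ + η < D z₀)
    {n : ℕ} (hn : 0 < n) :
    ∑ S : Fin n → Z,
      (if empProb S {p | p = z₀} ≤ empProb S {p | p = z₁} then iidWeight D S else 0)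
      ≤ Real.exp (-(n * η ^ 2 / 2)) := by
  have hη1 : η < 1 := by
    have h0 : D z₀ ≤ 1 := hD.2 ▸ single_le_sum (fun z _ => hD.1 z) (mem_univ z₀)
    linarith [hD.1 z₁]
  have hpos : 0 < 1 - η ^ 2 := by nlinarith
  obtain ⟨s, hs, hs2⟩ : ∃ s : ℝ, 0 < s ∧ s ^ 2 = 1 - η ^ 2 :=
    ⟨√(1 - η ^ 2), Real.sqrt_pos.2 hpos, Real.sq_sqrt hpos.le⟩
  have hs1 : s ≤ 1 := by nlinarith [sq_nonneg η]
  have hb : 1 ≤ (1 + η) / s := by rw [le_div_iff₀ hs]; linarith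
  have ha : 0 ≤ (1 - η) / s := div_nonneg (by linarith) hs.le
  have hab : (1 - η) / s * ((1 + η) / s) = 1 := by
    rw [div_mul_div_comm, div_eq_one_iff_eq (by positivity)]; nlinarith
  set w := tilt z₀ z₁ ((1 - η) / s) ((1 + η) / s) with hw
  have hw0 : ∀ z, 0 ≤ w z := by
    intro z
    simp only [hw, tilt]
    split_ifs <;> linarith
  have hDw : ∀ z, 0 ≤ D z * w z := fun z => mul_nonneg (hD.1 z) (hw0 z)
  have hsexp : s ≤ Real.exp (-(η ^ 2 / 2)) := by
    refine le_of_sq_le_sq ?_ (Real.exp_pos _).le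
    rw [hs2, ← Real.exp_nat_mul]
    have h := Real.add_one_le_exp (-η ^ 2)
    calc 1 - η ^ 2 ≤ Real.exp (-η ^ 2) := by linarith
      _ = _ := by congr 1; push_cast; ring
  calc _ ≤ ∑ S : Fin n → Z, iidWeight (fun z => D z * w z) S := by
        refine sum_le_sum fun S _ => ?_
        split_ifs with h
        · have h1 := one_le_prod_tilt hn hne hb hab S h
          have h2 : 0 ≤ iidWeight D S := prod_nonneg fun i _ => hD.1 _
          calc iidWeight D S ≤ iidWeight D S * ∏ i, w (S i) := le_mul_of_one_le_right h2 h1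
            _ = _ := by simp only [iidWeight, prod_mul_distrib]
        · exact prod_nonneg fun i _ => hDw _
    _ = (∑ z, D z * w z) ^ n := sum_iidWeight _ n
    _ ≤ (Real.exp (-(η ^ 2 / 2))) ^ n :=
        pow_le_pow_left₀ (sum_nonneg fun z _ => hDw z)
          ((sum_tilt_le hD hne hη hs hs2 hgap).trans hsexp) n
    _ = _ := by rw [← Real.exp_nat_mul]; congr 1; ring

/-- Under Assumption A1, a collective of size `n ≥ 2·log(1/δ̃)/η²` recovers, with
probability at least `1 - |X̃|·|Y|·δ̃`, the label `y*_{x̃}` as the unique empirical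
argmax at every signal feature `x̃`. -/
theorem collective_recovers_optimal_labels
    {X Y : Type*} [Fintype X] [Fintype Y] [Nonempty X] [Nonempty Y]
    (D : X × Y → ℝ) (hD : IsDistribution D)
    (g : X → X)
    (η : ℝ) (hη : 0 < η) (ystar : X → Y)
    (hA1 : ∀ xt ∈ Set.range g, ∀ y' : Y, y' ≠ ystar xt → D (xt, y') + η < D (xt, ystar xt))
    (δt : ℝ) (hδt0 : 0 < δt) (hδt1 : δt < 1)
    (n : ℕ) (hn : 0 < n) (hsize : 2 * Real.log (1 / δt) / η ^ 2 ≤ (n : ℝ)) :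
    1 - ((Finset.univ.image g).card : ℝ) * (Fintype.card Y : ℝ) * δt ≤
      ∑ S : Fin n → X × Y,
        (if ∀ xt ∈ Set.range g, ∀ y : Y, y ≠ ystar xt →
              empPoint S xt y < empPoint S xt (ystar xt)
          then iidWeight D S else 0) := by
  have hδ : Real.exp (-(n * η ^ 2 / 2)) ≤ δt := by
    rw [div_le_iff₀ (by positivity), one_div, Real.log_inv] at hsize
    calc _ ≤ Real.exp (Real.log δt) := Real.exp_le_exp.2 (by linarith)
      _ = δt := Real.exp_log hδt0
  have hW : ∀ S : Fin n → X × Y, 0 ≤ iidWeight D S := fun S => prod_nonneg fun i _ => hD.1 _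
  -- The weight of the datasets on which `y` spoils the argmax at `x`.
  let bad : X → Y → (Fin n → X × Y) → ℝ := fun x y S =>
    if y ≠ ystar x ∧ empPoint S x (ystar x) ≤ empPoint S x y then iidWeight D S else 0
  have hbad0 : ∀ x y S, 0 ≤ bad x y S := by
    intro x y S
    simp only [bad]
    split_ifs
    exacts [hW S, le_rfl]
  have hbad : ∀ x ∈ univ.image g, ∀ y, ∑ S, bad x y S ≤ δt := by
    intro x hx y
    by_cases hy : y = ystar x
    · simpa [bad, hy] using hδt0.le
    · have hx' : x ∈ Set.range g := by simpa using hx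
      have h := iid_tail hD (z₀ := (x, ystar x)) (z₁ := (x, y))
        (fun h => hy (Prod.ext_iff.1 h).2.symm) hη (hA1 x hx' y hy) hn
      refine le_trans (le_of_eq (sum_congr rfl fun S _ => ?_)) (h.trans hδ)
      exact if_congr (and_iff_right hy) rfl rfl
  have hunion : ∀ S : Fin n → X × Y, iidWeight D S ≤
      (if ∀ xt ∈ Set.range g, ∀ y : Y, y ≠ ystar xt →
              empPoint S xt y < empPoint S xt (ystar xt)
          then iidWeight D S else 0) + ∑ x ∈ univ.image g, ∑ y, bad x y S := by
    intro S
    split_ifs with h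
    · exact le_add_of_nonneg_right (sum_nonneg fun x _ => sum_nonneg fun y _ => hbad0 x y S)
    · push Not at h
      obtain ⟨x, hx, y, hy, hle⟩ := h
      have hx' : x ∈ univ.image g := by simpa using hx
      calc iidWeight D S = bad x y S := by simp only [bad]; rw [if_pos ⟨hy, hle⟩]
        _ ≤ ∑ y, bad x y S := single_le_sum (fun y _ => hbad0 x y S) (mem_univ y)
        _ ≤ ∑ x ∈ univ.image g, ∑ y, bad x y S :=
            single_le_sum (f := fun x => ∑ y, bad x y S)
              (fun x _ => sum_nonneg fun y _ => hbad0 x y S) hx'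
        _ = _ := (zero_add _).symm
  have htot := sum_le_sum fun S (_ : S ∈ univ) => hunion S
  rw [sum_iidWeight, hD.2, one_pow, sum_add_distrib] at htot
  have hsum : ∑ S, ∑ x ∈ univ.image g, ∑ y, bad x y S
      ≤ ((univ.image g).card : ℝ) * (Fintype.card Y : ℝ) * δt := by
    rw [sum_comm]
    calc _ = ∑ x ∈ univ.image g, ∑ y, ∑ S, bad x y S := sum_congr rfl fun x _ => sum_comm
      _ ≤ ∑ x ∈ univ.image g, ∑ _y : Y, δt :=
          sum_le_sum fun x hx => sum_le_sum fun y _ => hbad x hx y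
      _ = _ := by simp [mul_assoc]
  linarith
end
end
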